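/- Let f : ℝ₊ → ℝ be a strictly increasing concave function with f(1) = 0. Then the homogeneous deviation mean E_f is a Hardy mean if and only if ∫₀¹ f(1/t) dt < +∞; and when this integral is finite, the Hardy constant of E_f is the unique c > 1 satisfying ∫₀^c f(1/t) dt = 0. (Explicitly: the smallest C such that ∑_{n=1}^∞ y_n ≤ C·∑_{n=1}^∞ x_n for every positive sequence (x_n), where y_n is the unique positive solution of f(x_1/y_n)+⋯+f(x_n/y_n)=0, equals this c.) -/

import Mathlib

/-!
The upper bound rests on Kedlaya's inequality for the mean `E_f`: with `A j` the average of
`x 0, …, x j`, the arithmetic mean of the means `y 0, …, y N` is at most `E_f (A 0, …, A N)`.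
It follows from Jensen's inequality applied to `f` with the hypergeometric weights
`kedlayaWeight`, whose three marginal sums are explicit (`kedlaya_ineq`). Each `A j` is at most
`S / (j + 1)`, where `S = x 0 + ⋯ + x N`, so if `T = y 0 + ⋯ + y N` then the right-endpoint Riemann
sum of the decreasing function `t ↦ f (1 / t)` over `(0, T / S]` is nonnegative. That sum is bounded
by `∫ f (1 / t)` over `(0, T / S]`, which is negative when `T / S > c`; hence `T ≤ c S` already for
finite sums (`partial_hardy`).

For sharpness, let `∫ f (1 / t)` over `(δ, d)` be positive for some `δ`. The Riemann sums over
`(0, d]` are then eventually nonnegative, which says that the mean of `1, 1/2, …, 1/n` is at least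
`d / n` for large `n`. Testing a Hardy bound `C` on a long piece of the harmonic sequence and letting
its length grow gives `d ≤ C` (`le_hardy_bound`). If `f (1 / t)` is not integrable near `0`, this
applies to every `d ≥ 1`; if it is, to every `d` in `[1, c)`.
-/

open scoped ENNReal

/-- `C` is a Hardy bound for the homogeneous deviation mean `E_f`: for every positive
sequence `(x_n)`, if `y_n` denotes the (unique) positive solution of
`f(x_1/y_n)+⋯+f(x_n/y_n)=0`, then `∑ y_n ≤ C ∑ x_n`. -/
def IsHardyBoundDev (f : ℝ → ℝ) (C : ℝ≥0∞) : Prop :=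
  ∀ x y : ℕ → ℝ, (∀ k, 0 < x k) → (∀ k, 0 < y k) →
    (∀ k : ℕ, ∑ i ∈ Finset.range (k + 1), f (x i / y k) = 0) →
      ∑' k : ℕ, ENNReal.ofReal (y k) ≤ C * ∑' k : ℕ, ENNReal.ofReal (x k)

/-! ### Kedlaya's inequality -/

/-- The weight with which `x k` enters the `(i, j)` entry of Kedlaya's array of averages of
`x 0, …, x N`: the probability that a uniformly random `j`-element subset of an `N`-element set
meets a fixed `i`-element subset in exactly `k` points. -/
noncomputable def kedlayaWeight (N i j k : ℕ) : ℝ :=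
  if k ≤ j then (i.choose k * (N - i).choose (j - k) : ℝ) / N.choose j else 0

lemma kedlayaWeight_nonneg (N i j k : ℕ) : 0 ≤ kedlayaWeight N i j k := by
  unfold kedlayaWeight
  split_ifs <;> positivity

lemma kedlayaWeight_sum_k {N i j : ℕ} (hi : i ≤ N) (hj : j ≤ N) :
    ∑ k ∈ Finset.range (N + 1), kedlayaWeight N i j k = 1 := by
  have h1 : ∑ k ∈ Finset.range (N + 1), kedlayaWeight N i j k
      = ∑ k ∈ Finset.range (j + 1), (i.choose k * (N - i).choose (j - k) : ℝ) / N.choose j := by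
    symm
    refine Finset.sum_subset_zero_on_sdiff (Finset.range_subset_range.2 (by omega)) ?_ ?_
    · intro k hk
      simp only [Finset.mem_sdiff, Finset.mem_range] at hk
      exact if_neg (by omega)
    · intro k hk
      simp only [Finset.mem_range] at hk
      exact (if_pos (by omega)).symm
  rw [h1, ← Finset.sum_div, div_eq_one_iff_eq (by exact_mod_cast (Nat.choose_pos hj).ne')]
  have := Nat.add_choose_eq i (N - i) j
  rw [Finset.Nat.sum_antidiagonal_eq_sum_range_succ
    (f := fun a b => i.choose a * (N - i).choose b), Nat.add_sub_cancel' hi] at this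
  exact_mod_cast this.symm

/-- The upper-index form of Vandermonde's identity. -/
lemma sum_choose_mul_choose (k l N : ℕ) :
    ∑ i ∈ Finset.range (N + 1), i.choose k * (N - i).choose l = (N + 1).choose (k + l + 1) := by
  induction N generalizing l with
  | zero => 
    cases k <;> cases l <;> simp [Nat.choose_eq_zero_of_lt]
  | succ N ih =>
    cases l with
    | zero =>
      simp only [Nat.choose_zero_right, mul_one, add_zero]
      rw [Finset.sum_range_succ, Nat.choose_succ_succ' (N + 1) k]
      have := ih 0
      simp only [Nat.choose_zero_right, mul_one, add_zero] at this
      omega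
    | succ l =>
      rw [Finset.sum_range_succ, Nat.sub_self, Nat.choose_zero_succ, mul_zero, add_zero]
      have h : ∀ i ∈ Finset.range (N + 1), i.choose k * (N + 1 - i).choose (l + 1)
          = i.choose k * (N - i).choose l + i.choose k * (N - i).choose (l + 1) := by
        intro i hi
        simp only [Finset.mem_range] at hi
        rw [Nat.succ_sub (by omega), Nat.choose_succ_succ']
        ring
      rw [Finset.sum_congr rfl h, Finset.sum_add_distrib, ih, ih, ← add_assoc,
        Nat.choose_succ_succ' (N + 1)]

lemma kedlayaWeight_sum_i {N j : ℕ} (hj : j ≤ N) (k : ℕ) :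
    ∑ i ∈ Finset.range (N + 1), kedlayaWeight N i j k
      = if k ≤ j then ((N + 1 : ℝ) / (j + 1)) else 0 := by
  unfold kedlayaWeight
  split_ifs with h
  · have h1 := sum_choose_mul_choose k (j - k) N
    rw [Nat.add_sub_cancel' h] at h1
    have h2 := Nat.add_one_mul_choose_eq N j
    have h3 : (N.choose j : ℝ) ≠ 0 := by exact_mod_cast (Nat.choose_pos hj).ne'
    rw [← Finset.sum_div, div_eq_div_iff h3 (by positivity)]
    rw [← h1] at h2
    exact_mod_cast h2.symm
  · simp

/-- Exchanging the two subsets does not change the hypergeometric distribution of the size of their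
intersection; this yields the third marginal sum from the second. -/
lemma kedlayaWeight_symm {N i j : ℕ} (hi : i ≤ N) (hj : j ≤ N) (k : ℕ) :
    kedlayaWeight N i j k = kedlayaWeight N j i k := by
  unfold kedlayaWeight
  by_cases hkj : k ≤ j
  · by_cases hki : k ≤ i
    · rw [if_pos hkj, if_pos hki, div_eq_div_iff
        (by exact_mod_cast (Nat.choose_pos hj).ne') (by exact_mod_cast (Nat.choose_pos hi).ne')]
      -- both sides count the pairs of an `i`-set and a `j`-set in an `N`-set sharing `k` points
      by_cases hs : j - k ≤ N - i
      · obtain ⟨q, rfl⟩ := Nat.exists_eq_add_of_le hki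
        obtain ⟨r, rfl⟩ := Nat.exists_eq_add_of_le hkj
        obtain ⟨s, rfl⟩ : ∃ s, N = k + q + r + s := ⟨N - (k + q + r), by omega⟩
        rw [Nat.cast_choose ℝ hki, Nat.cast_choose ℝ hkj, Nat.cast_choose ℝ hi,
          Nat.cast_choose ℝ hj, Nat.cast_choose ℝ hs, Nat.cast_choose ℝ (by omega)]
        have e1 : k + q - k = q := by omega
        have e2 : k + r - k = r := by omega
        have e3 : k + q + r + s - (k + q) = r + s := by omega
        have e4 : k + q + r + s - (k + r) = q + s := by omega
        have e5 : r + s - r = s := by omega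
        have e6 : q + s - q = s := by omega
        simp only [e1, e2, e3, e4, e5, e6]
        field_simp
      · rw [Nat.choose_eq_zero_of_lt (by omega : N - i < j - k),
          Nat.choose_eq_zero_of_lt (by omega : N - j < i - k)]
        simp
    · rw [if_pos hkj, if_neg hki, Nat.choose_eq_zero_of_lt (by omega)]
      simp
  · by_cases hki : k ≤ i
    · rw [if_neg hkj, if_pos hki, Nat.choose_eq_zero_of_lt (by omega : j < k)]
      simp
    · rw [if_neg hkj, if_neg hki]

lemma kedlayaWeight_sum_j {N i : ℕ} (hi : i ≤ N) (k : ℕ) :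
    ∑ j ∈ Finset.range (N + 1), kedlayaWeight N i j k
      = if k ≤ i then ((N + 1 : ℝ) / (i + 1)) else 0 := by
  rw [← kedlayaWeight_sum_i hi k]
  refine Finset.sum_congr rfl fun j hj => kedlayaWeight_symm hi ?_ k
  simp only [Finset.mem_range] at hj
  omega

lemma sum_range_ite_le {N j : ℕ} (hj : j ≤ N) (c : ℝ) (u : ℕ → ℝ) :
    ∑ k ∈ Finset.range (N + 1), (if k ≤ j then c else 0) * u k
      = c * ∑ k ∈ Finset.range (j + 1), u k := by
  rw [Finset.mul_sum]
  symm
  refine Finset.sum_subset_zero_on_sdiff (Finset.range_subset_range.2 (by omega)) ?_ ?_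
  · intro k hk
    simp only [Finset.mem_sdiff, Finset.mem_range] at hk
    rw [if_neg (by omega), zero_mul]
  · intro k hk
    simp only [Finset.mem_range] at hk
    rw [if_pos (by omega)]

/-- Kedlaya's inequality: `E_f` of the arithmetic means of the initial segments is at least the
arithmetic mean `T / (N + 1)` of the deviation means `y 0, …, y N`, expressed through the sign of the
deviation sum at that point. It uses only Jensen's inequality for `f` and the marginal sums of
`kedlayaWeight`. -/
lemma kedlaya_ineq {f : ℝ → ℝ} (hconc : ConcaveOn ℝ (Set.Ioi 0) f) {x y : ℕ → ℝ}
    (hx : ∀ k, 0 < x k) (hy : ∀ k, 0 < y k)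
    (h0 : ∀ k : ℕ, ∑ i ∈ Finset.range (k + 1), f (x i / y k) = 0) (N : ℕ) :
    0 ≤ ∑ j ∈ Finset.range (N + 1), f ((N + 1 : ℝ) / (j + 1) * (∑ k ∈ Finset.range (j + 1), x k)
      / ∑ i ∈ Finset.range (N + 1), y i) := by
  set T := ∑ i ∈ Finset.range (N + 1), y i with hT
  have hTpos : 0 < T := Finset.sum_pos (fun i _ => hy i) (by simp)
  have jensen : ∀ j ∈ Finset.range (N + 1),
      ∑ i ∈ Finset.range (N + 1), ∑ k ∈ Finset.range (N + 1),
        (y i / T * kedlayaWeight N i j k) * f (x k / y i)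
      ≤ f ((N + 1 : ℝ) / (j + 1) * (∑ k ∈ Finset.range (j + 1), x k) / T) := by
    intro j hj
    have hjN : j ≤ N := by simpa [Nat.lt_succ_iff] using hj
    have key := hconc.le_map_sum (t := Finset.range (N + 1) ×ˢ Finset.range (N + 1))
      (w := fun p => y p.1 / T * kedlayaWeight N p.1 j p.2) (p := fun p => x p.2 / y p.1)
      (fun p _ => mul_nonneg (div_nonneg (hy _).le hTpos.le) (kedlayaWeight_nonneg _ _ _ _))
      (by
        rw [Finset.sum_product]
        have : ∀ i ∈ Finset.range (N + 1), ∑ k ∈ Finset.range (N + 1),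
            y i / T * kedlayaWeight N i j k = y i / T := by
          intro i hi
          have hiN : i ≤ N := by simpa [Nat.lt_succ_iff] using hi
          rw [← Finset.mul_sum, kedlayaWeight_sum_k hiN hjN, mul_one]
        simp only []
        rw [Finset.sum_congr rfl this, ← Finset.sum_div, ← hT, div_self hTpos.ne'])
      (fun p _ => div_pos (hx _) (hy _))
    rw [Finset.sum_product, Finset.sum_product] at key
    simp only [smul_eq_mul] at key
    refine key.trans_eq ?_
    congr 1
    rw [Finset.sum_comm]
    have : ∀ k ∈ Finset.range (N + 1), ∑ i ∈ Finset.range (N + 1),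
        y i / T * kedlayaWeight N i j k * (x k / y i)
        = (if k ≤ j then ((N + 1 : ℝ) / (j + 1)) else 0) * (x k / T) := by
      intro k _
      rw [← kedlayaWeight_sum_i hjN k, Finset.sum_mul]
      refine Finset.sum_congr rfl fun i _ => ?_
      have := (hy i).ne'
      field_simp
    rw [Finset.sum_congr rfl this, sum_range_ite_le hjN, ← Finset.sum_div, mul_div_assoc]
  refine le_trans (le_of_eq ?_) (Finset.sum_le_sum jensen)
  rw [Finset.sum_comm]
  symm
  refine Finset.sum_eq_zero fun i hi => ?_
  have hiN : i ≤ N := by simpa [Nat.lt_succ_iff] using hi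
  rw [Finset.sum_comm]
  have : ∀ k ∈ Finset.range (N + 1), ∑ j ∈ Finset.range (N + 1),
      y i / T * kedlayaWeight N i j k * f (x k / y i)
      = (if k ≤ i then ((N + 1 : ℝ) / (i + 1)) else 0) * (y i / T * f (x k / y i)) := by
    intro k _
    rw [← kedlayaWeight_sum_j hiN k, Finset.sum_mul]
    refine Finset.sum_congr rfl fun j _ => ?_
    ring
  rw [Finset.sum_congr rfl this, sum_range_ite_le hiN, ← Finset.mul_sum, h0, mul_zero, mul_zero]
/-! ### Integrals and Riemann sums of a decreasing function -/

section Reciprocal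

variable {g : ℝ → ℝ}

lemma intervalIntegrable_of_pos (hcont : ContinuousOn g (Set.Ioi 0)) {a b : ℝ} (ha : 0 < a)
    (hb : 0 < b) : IntervalIntegrable g MeasureTheory.volume a b := by
  refine ContinuousOn.intervalIntegrable (hcont.mono fun t ht => ?_)
  exact (lt_min ha hb).trans_le ht.1

lemma intervalIntegrable_zero (hcont : ContinuousOn g (Set.Ioi 0))
    (hint : MeasureTheory.IntegrableOn g (Set.Ioo 0 1)) {b : ℝ} (hb : 0 ≤ b) :
    IntervalIntegrable g MeasureTheory.volume 0 b := by
  have h01 : IntervalIntegrable g MeasureTheory.volume 0 1 :=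
    (intervalIntegrable_iff_integrableOn_Ioo_of_le zero_le_one).2 hint
  rcases hb.eq_or_lt with rfl | hb
  · exact IntervalIntegrable.refl
  · exact h01.trans (intervalIntegrable_of_pos hcont one_pos hb)

lemma setIntegral_eq_interval {c : ℝ} (hc : 0 ≤ c) :
    ∫ t in Set.Ioo (0 : ℝ) c, g t = ∫ t in (0 : ℝ)..c, g t := by
  rw [intervalIntegral.integral_of_le hc, MeasureTheory.integral_Ioc_eq_integral_Ioo]

/-- A right-endpoint Riemann sum of a decreasing function lies below the integral. -/
lemma riemann_le_integral (hanti : StrictAntiOn g (Set.Ioi 0))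
    (hcont : ContinuousOn g (Set.Ioi 0)) (hint : MeasureTheory.IntegrableOn g (Set.Ioo 0 1))
    {h : ℝ} (hh : 0 < h) (n : ℕ) :
    h * ∑ j ∈ Finset.range n, g ((j + 1) * h) ≤ ∫ t in (0 : ℝ)..(n * h), g t := by
  have hI : ∀ k < n, IntervalIntegrable g MeasureTheory.volume ((k : ℕ) * h)
      ((k + 1 : ℕ) * h) := fun k _ =>
    (intervalIntegrable_zero hcont hint (by positivity)).symm.trans
      (intervalIntegrable_zero hcont hint (by positivity))
  have := intervalIntegral.sum_integral_adjacent_intervals (a := fun k : ℕ => (k : ℝ) * h) hI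
  simp only [Nat.cast_zero, zero_mul] at this
  rw [← this, Finset.mul_sum]
  refine Finset.sum_le_sum fun k hk => ?_
  have hle : (k : ℝ) * h ≤ ((k + 1 : ℕ) : ℝ) * h := by push_cast; nlinarith
  have h2 := intervalIntegral.integral_mono_on_of_le_Ioo (μ := MeasureTheory.volume)
    (f := fun _ => g ((k + 1) * h)) (g := g) hle (by simp) (hI k (Finset.mem_range.1 hk)) (by
      intro t ht
      have ht0 : 0 < t := lt_of_le_of_lt (by positivity) ht.1
      refine hanti.antitoneOn ht0 (Set.mem_Ioi.2 (by positivity)) ?_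
      have := ht.2.le
      push_cast at this
      exact this)
  rw [intervalIntegral.integral_const] at h2
  refine le_trans (le_of_eq ?_) h2
  push_cast
  rw [smul_eq_mul]
  ring

/-- The same Riemann sum lies above the integral shifted by one mesh length. -/
lemma integral_le_riemann (hanti : StrictAntiOn g (Set.Ioi 0))
    (hcont : ContinuousOn g (Set.Ioi 0)) {h : ℝ} (hh : 0 < h) (n : ℕ) :
    ∫ t in h..((n + 1) * h), g t ≤ h * ∑ j ∈ Finset.range n, g ((j + 1) * h) := by
  have hI : ∀ k < n, IntervalIntegrable g MeasureTheory.volume (((k : ℕ) + 1) * h)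
      (((k + 1 : ℕ) + 1) * h) := fun k _ =>
    intervalIntegrable_of_pos hcont (by positivity) (by positivity)
  have := intervalIntegral.sum_integral_adjacent_intervals
    (a := fun k : ℕ => ((k : ℝ) + 1) * h) hI
  simp only [Nat.cast_zero, zero_add, one_mul] at this
  rw [← this, Finset.mul_sum]
  refine Finset.sum_le_sum fun k hk => ?_
  have hle : ((k : ℝ) + 1) * h ≤ (((k + 1 : ℕ) : ℝ) + 1) * h := by push_cast; nlinarith
  have h2 := intervalIntegral.integral_mono_on_of_le_Ioo (μ := MeasureTheory.volume)
    (f := g) (g := fun _ => g ((k + 1) * h)) hle (hI k (Finset.mem_range.1 hk)) (by simp) (by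
      intro t ht
      have hk0 : (0 : ℝ) < (k + 1) * h := by positivity
      exact hanti.antitoneOn hk0 (hk0.trans ht.1) ht.1.le)
  rw [intervalIntegral.integral_const] at h2
  refine h2.trans (le_of_eq ?_)
  push_cast
  rw [smul_eq_mul]
  ring

/-- Beyond `1` the primitive `c ↦ ∫₀ᶜ g` is strictly decreasing. -/
lemma primitive_strictAnti (hanti : StrictAntiOn g (Set.Ioi 0))
    (hcont : ContinuousOn g (Set.Ioi 0)) (hg1 : g 1 = 0)
    (hint : MeasureTheory.IntegrableOn g (Set.Ioo 0 1)) {c d : ℝ} (hc : 1 ≤ c) (hcd : c < d) :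
    ∫ t in (0 : ℝ)..d, g t < ∫ t in (0 : ℝ)..c, g t := by
  have hI := intervalIntegrable_of_pos hcont (by linarith : 0 < c) (by linarith : 0 < d)
  rw [← intervalIntegral.integral_add_adjacent_intervals
    (intervalIntegrable_zero hcont hint (by linarith : 0 ≤ c)) hI]
  have := intervalIntegral.intervalIntegral_pos_of_pos_on hI.neg (fun t ht => by
    have h1 : g t < g 1 := hanti (Set.mem_Ioi.2 one_pos)
      (Set.mem_Ioi.2 (by linarith [ht.1])) (by linarith [ht.1])
    simp only [Pi.neg_apply]
    linarith) hcd
  simp only [Pi.neg_apply, intervalIntegral.integral_neg] at this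
  linarith

lemma exists_primitive_zero (hanti : StrictAntiOn g (Set.Ioi 0))
    (hcont : ContinuousOn g (Set.Ioi 0)) (hg1 : g 1 = 0)
    (hint : MeasureTheory.IntegrableOn g (Set.Ioo 0 1)) :
    ∃ c : ℝ, 1 < c ∧ ∫ t in (0 : ℝ)..c, g t = 0 := by
  have hpos1 : 0 < ∫ t in (0 : ℝ)..1, g t :=
    intervalIntegral.intervalIntegral_pos_of_pos_on
      (intervalIntegrable_zero hcont hint zero_le_one) (fun t ht => by
        rw [← hg1]; exact hanti ht.1 (Set.mem_Ioi.2 one_pos) ht.2) one_pos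
  have h2 : g 2 < 0 := by
    rw [← hg1]; exact hanti (by simp) (by simp) one_lt_two
  set I2 := ∫ t in (0 : ℝ)..2, g t with hI2
  -- past `2` the primitive decreases at least at the rate `|g 2|`
  obtain ⟨b, hb2, hb⟩ : ∃ b : ℝ, 2 < b ∧ ∫ t in (0 : ℝ)..b, g t ≤ 0 := by
    refine ⟨2 + (|I2| + 1) / (-g 2), ?_, ?_⟩
    · have : 0 < (|I2| + 1) / (-g 2) := div_pos (by positivity) (by linarith)
      linarith
    · have hpos : 0 < (|I2| + 1) / (-g 2) := div_pos (by positivity) (by linarith)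
      have hI := intervalIntegrable_of_pos hcont two_pos
        (by linarith : 0 < 2 + (|I2| + 1) / (-g 2))
      rw [← intervalIntegral.integral_add_adjacent_intervals
        (intervalIntegrable_zero hcont hint zero_le_two) hI, ← hI2]
      have := intervalIntegral.integral_mono_on_of_le_Ioo (μ := MeasureTheory.volume)
        (f := g) (g := fun _ => g 2) (by linarith) hI (by simp) (by
          intro t ht
          exact hanti.antitoneOn (by simp) (Set.mem_Ioi.2 (by linarith [ht.1])) ht.1.le)
      rw [intervalIntegral.integral_const, smul_eq_mul] at this
      have e : (2 + (|I2| + 1) / (-g 2) - 2) * g 2 = -(|I2| + 1) := by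
        have := h2.ne
        field_simp
        ring
      rw [e] at this
      linarith [le_abs_self I2]
  have hc : ContinuousOn (fun x => ∫ t in (0 : ℝ)..x, g t) (Set.Icc 1 b) := by
    have := intervalIntegral.continuousOn_primitive_interval' (a := 0) (b₁ := 0) (b₂ := b)
      (intervalIntegrable_zero hcont hint (by linarith)) Set.left_mem_uIcc
    rw [Set.uIcc_of_le (by linarith)] at this
    exact this.mono (Set.Icc_subset_Icc_left zero_le_one)
  obtain ⟨c, hc1, hc0⟩ := intermediate_value_Icc' (by linarith : (1 : ℝ) ≤ b) hc
    ⟨hb, hpos1.le⟩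
  refine ⟨c, lt_of_le_of_ne hc1.1 ?_, hc0⟩
  rintro rfl
  exact hpos1.ne' hc0

/-- If some truncated integral `∫_δ^d g` is positive, then the Riemann sums of `g` over `(0, d]`
are eventually nonnegative: the part of the integral near `0` only helps, and the overshoot past
`d` tends to zero. -/
lemma riemann_eventually_nonneg (hanti : StrictAntiOn g (Set.Ioi 0))
    (hcont : ContinuousOn g (Set.Ioi 0)) (hg1 : g 1 = 0) {d δ : ℝ} (hd : 1 ≤ d) (hδ : 0 < δ)
    (hδ1 : δ ≤ 1) (hpos : 0 < ∫ t in δ..d, g t) :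
    ∃ k₀ : ℕ, ∀ k ≥ k₀, 0 ≤ ∑ j ∈ Finset.range (k + 1), g ((j + 1) * (d / (k + 1 : ℕ))) := by
  set P := ∫ t in δ..d, g t
  have hd0 : 0 < d := by linarith
  have t0 : Filter.Tendsto (fun k : ℕ => d / ((k : ℝ) + 1)) Filter.atTop (nhds 0) :=
    (tendsto_const_nhds (x := d)).div_atTop
      (Filter.tendsto_atTop_add_const_right _ _ tendsto_natCast_atTop_atTop)
  have e1 := t0.eventually (gt_mem_nhds hδ)
  have e2 := t0.eventually (gt_mem_nhds hd0)
  have t3 : Filter.Tendsto (fun k : ℕ => d / ((k : ℝ) + 1) * (-g (2 * d))) Filter.atTop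
      (nhds 0) := by simpa using t0.mul_const (-g (2 * d))
  have e3 := t3.eventually (gt_mem_nhds hpos)
  obtain ⟨k₀, hk₀⟩ := Filter.eventually_atTop.1 (e1.and (e2.and e3))
  refine ⟨k₀, fun k hk => ?_⟩
  obtain ⟨h1, h2, h3⟩ := hk₀ k hk
  push_cast
  set h := d / ((k : ℝ) + 1) with hh
  have hhpos : 0 < h := by positivity
  have key := integral_le_riemann hanti hcont hhpos (k + 1)
  have hend : (((k + 1 : ℕ) : ℝ) + 1) * h = d + h := by
    push_cast
    rw [hh]
    field_simp
  rw [hend, ← intervalIntegral.integral_add_adjacent_intervals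
      (intervalIntegrable_of_pos hcont hhpos hδ)
      (intervalIntegrable_of_pos hcont hδ (by linarith : 0 < d + h)),
    ← intervalIntegral.integral_add_adjacent_intervals (a := δ)
      (intervalIntegrable_of_pos hcont hδ hd0)
      (intervalIntegrable_of_pos hcont hd0 (by linarith : 0 < d + h))] at key
  have p1 : 0 ≤ ∫ t in h..δ, g t := by
    refine intervalIntegral.integral_nonneg h1.le fun t ht => ?_
    rw [← hg1]
    exact hanti.antitoneOn (hhpos.trans_le ht.1) (by simp) (ht.2.trans hδ1)
  have p2 : h * g (2 * d) ≤ ∫ t in d..(d + h), g t := by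
    have := intervalIntegral.integral_mono_on_of_le_Ioo (μ := MeasureTheory.volume)
      (f := fun _ => g (2 * d)) (g := g) (by linarith : d ≤ d + h) (by simp)
      (intervalIntegrable_of_pos hcont hd0 (by linarith : 0 < d + h)) (by
        intro t ht
        exact hanti.antitoneOn (hd0.trans ht.1) (Set.mem_Ioi.2 (by linarith))
          (by linarith [ht.2]))
    rw [intervalIntegral.integral_const, smul_eq_mul, add_sub_cancel_left] at this
    exact this
  have : 0 ≤ h * ∑ j ∈ Finset.range (k + 1), g ((j + 1) * h) := by linarith
  exact nonneg_of_mul_nonneg_right this hhpos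

/-- If the truncated integrals `∫_δ^d g` stay nonpositive as `δ → 0`, then `g` is integrable
near `0`. -/
lemma integrableOn_of_truncated_nonpos (hanti : StrictAntiOn g (Set.Ioi 0))
    (hcont : ContinuousOn g (Set.Ioi 0)) (hg1 : g 1 = 0) {d : ℝ} (hd : 1 ≤ d)
    (H : ∀ δ : ℝ, 0 < δ → δ ≤ 1 → ∫ t in δ..d, g t ≤ 0) :
    MeasureTheory.IntegrableOn g (Set.Ioo 0 1) := by
  rw [← integrableOn_Ioc_iff_integrableOn_Ioo]
  refine MeasureTheory.integrableOn_Ioc_of_intervalIntegral_norm_bounded_left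
    (l := Filter.atTop) (a := fun n : ℕ => 1 / ((n : ℝ) + 1)) (I := -∫ t in (1 : ℝ)..d, g t)
    (fun n => ?_) tendsto_one_div_add_atTop_nhds_zero_nat (Filter.Eventually.of_forall fun n => ?_)
  · exact (intervalIntegrable_of_pos hcont (by positivity) one_pos).1
  · have hn0 : (0 : ℝ) < 1 / ((n : ℝ) + 1) := by positivity
    have hn1 : 1 / ((n : ℝ) + 1) ≤ 1 := by
      rw [div_le_one (by positivity)]
      linarith [(Nat.cast_nonneg n : (0 : ℝ) ≤ n)]
    have h1 := H _ hn0 hn1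
    rw [← intervalIntegral.integral_add_adjacent_intervals
      (intervalIntegrable_of_pos hcont hn0 one_pos)
      (intervalIntegrable_of_pos hcont one_pos (by linarith : 0 < d))] at h1
    rw [← intervalIntegral.integral_of_le hn1]
    have h2 : ∫ t in (1 / ((n : ℝ) + 1))..1, ‖g t‖ = ∫ t in (1 / ((n : ℝ) + 1))..1, g t := by
      refine intervalIntegral.integral_congr fun t ht => ?_
      rw [Set.uIcc_of_le hn1] at ht
      simp only [Real.norm_eq_abs]
      refine abs_of_nonneg ?_
      rw [← hg1]
      exact hanti.antitoneOn (hn0.trans_le ht.1) (by simp) ht.2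
    rw [h2]
    linarith

end Reciprocal

/-- The Hardy inequality for finite sums: otherwise Kedlaya's inequality would make a Riemann sum of
`f (1 / t)` over an interval `(0, e]` with `e > c` nonnegative, although the integral over that
interval is negative. -/
lemma partial_hardy {f : ℝ → ℝ} (hconc : ConcaveOn ℝ (Set.Ioi 0) f)
    (hmono : StrictMonoOn f (Set.Ioi 0))
    (hanti : StrictAntiOn (fun t => f t⁻¹) (Set.Ioi 0))
    (hcont : ContinuousOn (fun t => f t⁻¹) (Set.Ioi 0)) (hf1 : f 1 = 0)
    (hint : MeasureTheory.IntegrableOn (fun t => f t⁻¹) (Set.Ioo 0 1))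
    {c : ℝ} (hc : 1 < c) (hc0 : ∫ t in (0 : ℝ)..c, f t⁻¹ = 0) {x y : ℕ → ℝ}
    (hx : ∀ k, 0 < x k) (hy : ∀ k, 0 < y k)
    (h0 : ∀ k : ℕ, ∑ i ∈ Finset.range (k + 1), f (x i / y k) = 0) (N : ℕ) :
    ∑ i ∈ Finset.range (N + 1), y i ≤ c * ∑ i ∈ Finset.range (N + 1), x i := by
  by_contra! hlt
  have hK := kedlaya_ineq hconc hx hy h0 N
  set T := ∑ i ∈ Finset.range (N + 1), y i with hT
  set S := ∑ i ∈ Finset.range (N + 1), x i with hS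
  have hTpos : 0 < T := Finset.sum_pos (fun i _ => hy i) (by simp)
  have hSpos : 0 < S := Finset.sum_pos (fun i _ => hx i) (by simp)
  set e := T / S with he
  have hce : c < e := by rwa [he, lt_div_iff₀ hSpos]
  have hh : 0 < e / (N + 1 : ℕ) := by positivity
  have hR := riemann_le_integral hanti hcont hint hh (N + 1)
  rw [mul_div_cancel₀ _ (by positivity)] at hR
  have hneg := primitive_strictAnti hanti hcont (by simpa using hf1) hint hc.le hce
  rw [hc0] at hneg
  have hle : ∑ j ∈ Finset.range (N + 1),
        f ((N + 1 : ℝ) / (j + 1) * (∑ k ∈ Finset.range (j + 1), x k) / T)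
      ≤ ∑ j ∈ Finset.range (N + 1), f (((j + 1 : ℝ) * (e / (N + 1 : ℕ)))⁻¹) := by
    refine Finset.sum_le_sum fun j hj => ?_
    have hjS : ∑ k ∈ Finset.range (j + 1), x k ≤ S := by
      refine Finset.sum_le_sum_of_subset_of_nonneg ?_ (fun i _ _ => (hx i).le)
      exact Finset.range_subset_range.2 (by simpa using hj)
    have hjpos : 0 < ∑ k ∈ Finset.range (j + 1), x k :=
      Finset.sum_pos (fun i _ => hx i) (by simp)
    have e1 : ((j + 1 : ℝ) * (e / (N + 1 : ℕ)))⁻¹ = (N + 1 : ℝ) / (j + 1) * S / T := by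
      rw [he]
      push_cast
      field_simp
    rw [e1]
    refine hmono.monotoneOn (Set.mem_Ioi.2 (by positivity)) (Set.mem_Ioi.2 (by positivity)) ?_
    gcongr
  have : 0 ≤ e / (N + 1 : ℕ) *
      ∑ j ∈ Finset.range (N + 1), f (((j + 1 : ℝ) * (e / (N + 1 : ℕ)))⁻¹) :=
    mul_nonneg hh.le (hK.trans hle)
  linarith

/-- Existence of the deviation mean of `x 0, …, x k`. -/
lemma exists_deviation_mean {f : ℝ → ℝ} (hmono : StrictMonoOn f (Set.Ioi 0))
    (hcont : ContinuousOn f (Set.Ioi 0)) (hf1 : f 1 = 0) {x : ℕ → ℝ} (hx : ∀ k, 0 < x k)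
    (k : ℕ) : ∃ y : ℝ, 0 < y ∧ ∑ i ∈ Finset.range (k + 1), f (x i / y) = 0 := by
  obtain ⟨a, _, ha⟩ := Finset.exists_min_image (Finset.range (k + 1)) x ⟨0, by simp⟩
  obtain ⟨b, hb', hb⟩ := Finset.exists_max_image (Finset.range (k + 1)) x ⟨0, by simp⟩
  have hab : x a ≤ x b := ha b hb'
  have hc : ContinuousOn (fun y => ∑ i ∈ Finset.range (k + 1), f (x i / y))
      (Set.Icc (x a) (x b)) := by
    refine continuousOn_finsetSum _ fun i _ => hcont.comp ?_ ?_
    · exact continuousOn_const.div continuousOn_id fun y hy => ((hx a).trans_le hy.1).ne'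
    · exact fun y hy => div_pos (hx i) ((hx a).trans_le hy.1)
  have hpos : 0 ≤ ∑ i ∈ Finset.range (k + 1), f (x i / x a) := by
    refine Finset.sum_nonneg fun i hi => ?_
    rw [← hf1]
    exact hmono.monotoneOn (by simp) (div_pos (hx i) (hx a))
      ((one_le_div (hx a)).2 (ha i hi))
  have hneg : ∑ i ∈ Finset.range (k + 1), f (x i / x b) ≤ 0 := by
    refine Finset.sum_nonpos fun i hi => ?_
    rw [← hf1]
    exact hmono.monotoneOn (div_pos (hx i) (hx b)) (by simp)
      ((div_le_one (hx b)).2 (hb i hi))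
  obtain ⟨y, hy, hy0⟩ := intermediate_value_Icc' hab hc ⟨hneg, hpos⟩
  exact ⟨y, (hx a).trans_le hy.1, hy0⟩

/-- A Hardy bound dominates every `d` for which some truncated integral `∫_δ^d f(1/t) dt` is
positive: test it on the first `N` terms of the harmonic sequence, continued by a geometric tail,
and let `N → ∞`. -/
lemma le_hardy_bound {f : ℝ → ℝ} (hmono : StrictMonoOn f (Set.Ioi 0))
    (hfcont : ContinuousOn f (Set.Ioi 0))
    (hanti : StrictAntiOn (fun t => f t⁻¹) (Set.Ioi 0))
    (hcont : ContinuousOn (fun t => f t⁻¹) (Set.Ioi 0)) (hf1 : f 1 = 0)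
    {C d δ : ℝ} (hC0 : 0 ≤ C) (hC : IsHardyBoundDev f (ENNReal.ofReal C))
    (hd : 1 ≤ d) (hδ : 0 < δ) (hδ1 : δ ≤ 1) (hpos : 0 < ∫ t in δ..d, f t⁻¹) : d ≤ C := by
  obtain ⟨k₀, hk₀⟩ := riemann_eventually_nonneg hanti hcont (by simpa using hf1) hd hδ hδ1 hpos
  -- the mean of the first `k + 1` harmonic terms is at least `d / (k + 1)`
  have hmean : ∀ k ≥ k₀, ∀ y : ℝ, 0 < y →
      ∑ i ∈ Finset.range (k + 1), f (1 / ((i : ℝ) + 1) / y) = 0 → d * (1 / ((k : ℝ) + 1)) ≤ y := by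
    intro k hk y hy hy0
    by_contra! hlt
    have h1 := hk₀ k hk
    have h2 : ∑ i ∈ Finset.range (k + 1), f (((i + 1 : ℝ) * (d / (k + 1 : ℕ)))⁻¹)
        < ∑ i ∈ Finset.range (k + 1), f (1 / ((i : ℝ) + 1) / y) := by
      refine Finset.sum_lt_sum_of_nonempty (by simp) fun i _ => ?_
      refine hmono (Set.mem_Ioi.2 (by positivity)) (Set.mem_Ioi.2 (by positivity)) ?_
      rw [div_div, one_div]
      refine inv_strictAnti₀ (by positivity) ?_
      refine mul_lt_mul_of_pos_left ?_ (by positivity)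
      push_cast
      rwa [div_eq_mul_one_div]
    linarith
  -- the harmonic numbers
  let Hs : ℕ → ℝ := fun n => ∑ i ∈ Finset.range n, 1 / ((i : ℝ) + 1)
  have hbound : ∀ N ≥ k₀, d * (Hs N - Hs k₀) ≤ C * (Hs N + 2) := by
    intro N hN
    let x : ℕ → ℝ := fun i => if i < N then 1 / ((i : ℝ) + 1) else (1 / 2) ^ i
    have hx : ∀ i, 0 < x i := by
      intro i
      simp only [x]
      split_ifs <;> positivity
    choose y hy hy0 using exists_deviation_mean hmono hfcont hf1 hx
    have hH := hC x y hx hy hy0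
    have hxsum : ∑' k, ENNReal.ofReal (x k) ≤ ENNReal.ofReal (Hs N + 2) := by
      refine ENNReal.tsum_le_of_sum_range_le fun n => ?_
      rw [← ENNReal.ofReal_sum_of_nonneg fun i _ => (hx i).le]
      refine ENNReal.ofReal_le_ofReal ?_
      have : ∀ i ∈ Finset.range n, x i ≤
          (if i < N then 1 / ((i : ℝ) + 1) else 0) + (1 / 2) ^ i := by
        intro i _
        simp only [x]
        split_ifs
        · have : (0 : ℝ) < (1 / 2) ^ i := by positivity
          linarith
        · simp
      refine (Finset.sum_le_sum this).trans ?_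
      rw [Finset.sum_add_distrib]
      refine add_le_add ?_ (sum_geometric_two_le n)
      rw [← Finset.sum_filter]
      refine Finset.sum_le_sum_of_subset_of_nonneg ?_ (fun i _ _ => by positivity)
      intro i hi
      simpa using (Finset.mem_filter.1 hi).2
    have hysum : ENNReal.ofReal (∑ k ∈ Finset.Ico k₀ N, y k) ≤ ∑' k, ENNReal.ofReal (y k) := by
      rw [ENNReal.ofReal_sum_of_nonneg fun i _ => (hy i).le]
      exact ENNReal.sum_le_tsum _
    have hHs : 0 ≤ Hs N + 2 := add_nonneg (Finset.sum_nonneg fun i _ => by positivity) (by simp)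
    have hfin : ∑ k ∈ Finset.Ico k₀ N, y k ≤ C * (Hs N + 2) := by
      rw [← ENNReal.ofReal_le_ofReal_iff (mul_nonneg hC0 hHs), ENNReal.ofReal_mul hC0]
      exact hysum.trans (hH.trans (by gcongr))
    refine le_trans ?_ hfin
    rw [← Finset.sum_Ico_eq_sub _ hN, Finset.mul_sum]
    refine Finset.sum_le_sum fun k hk => ?_
    rw [Finset.mem_Ico] at hk
    refine hmean k hk.1 _ (hy k) ?_
    rw [← hy0 k]
    refine Finset.sum_congr rfl fun i hi => ?_
    have : i < N := by
      have := Finset.mem_range.1 hi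
      omega
    simp only [x, if_pos this]
  by_contra! hlt
  have ht : Filter.Tendsto (fun N => (d - C) * Hs N) Filter.atTop Filter.atTop :=
    Real.tendsto_sum_range_one_div_nat_succ_atTop.const_mul_atTop (by linarith)
  obtain ⟨N, hN1, hN2⟩ := ((ht.eventually_gt_atTop (C * 2 + d * Hs k₀)).and
    (Filter.eventually_ge_atTop k₀)).exists
  have := hbound N hN2
  nlinarith

/-- **Theorem (Hardy constant of homogeneous deviation means).** Let `f : ℝ₊ → ℝ` be strictly
increasing and concave with `f(1) = 0`. The deviation mean `E_f` is a Hardy mean if and only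
if `∫₀¹ f(1/t) dt < ∞`, and in that case its Hardy constant is the unique `c > 1` with
`∫₀^c f(1/t) dt = 0`. -/
theorem deviation_mean_hardy_constant (f : ℝ → ℝ)
    (hmono : StrictMonoOn f (Set.Ioi 0)) (hconc : ConcaveOn ℝ (Set.Ioi 0) f)
    (hf1 : f 1 = 0) :
    ((∃ C : ℝ≥0∞, C ≠ ⊤ ∧ IsHardyBoundDev f C) ↔
        MeasureTheory.IntegrableOn (fun t => f t⁻¹) (Set.Ioo 0 1)) ∧
      (MeasureTheory.IntegrableOn (fun t => f t⁻¹) (Set.Ioo 0 1) →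
        (∃! c : ℝ, 1 < c ∧ ∫ t in Set.Ioo (0 : ℝ) c, f t⁻¹ = 0) ∧
        ∀ c : ℝ, 1 < c → (∫ t in Set.Ioo (0 : ℝ) c, f t⁻¹) = 0 →
          IsHardyBoundDev f (ENNReal.ofReal c) ∧
            ∀ C : ℝ≥0∞, IsHardyBoundDev f C → ENNReal.ofReal c ≤ C) := by
  have hfcont : ContinuousOn f (Set.Ioi 0) := hconc.continuousOn isOpen_Ioi
  have hanti : StrictAntiOn (fun t => f t⁻¹) (Set.Ioi 0) := fun s hs t ht hst =>
    hmono (Set.mem_Ioi.2 (inv_pos.2 ht)) (Set.mem_Ioi.2 (inv_pos.2 hs)) (inv_strictAnti₀ hs hst)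
  have hcont : ContinuousOn (fun t => f t⁻¹) (Set.Ioi 0) :=
    hfcont.comp (continuousOn_inv₀.mono fun t ht => (Set.mem_Ioi.1 ht).ne')
      fun t ht => Set.mem_Ioi.2 (inv_pos.2 ht)
  have hg1 : (fun t => f t⁻¹) 1 = 0 := by simpa using hf1
  have upper : MeasureTheory.IntegrableOn (fun t => f t⁻¹) (Set.Ioo 0 1) → ∀ c : ℝ, 1 < c →
      ∫ t in (0 : ℝ)..c, f t⁻¹ = 0 → IsHardyBoundDev f (ENNReal.ofReal c) := by
    intro hint c hc hc0 x y hx hy h0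
    refine ENNReal.tsum_le_of_sum_range_le fun n => ?_
    cases n with
    | zero => simp
    | succ N =>
      have := partial_hardy hconc hmono hanti hcont hf1 hint hc hc0 hx hy h0 N
      rw [← ENNReal.ofReal_sum_of_nonneg fun i _ => (hy i).le]
      refine (ENNReal.ofReal_le_ofReal this).trans ?_
      rw [ENNReal.ofReal_mul (by linarith), ENNReal.ofReal_sum_of_nonneg fun i _ => (hx i).le]
      gcongr
      exact ENNReal.sum_le_tsum _
  refine ⟨⟨?_, ?_⟩, ?_⟩
  · rintro ⟨C, hCtop, hC⟩
    rw [← ENNReal.ofReal_toReal hCtop] at hC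
    refine integrableOn_of_truncated_nonpos (d := C.toReal + 1) hanti hcont hg1
      (by linarith [C.toReal_nonneg]) fun δ hδ hδ1 => ?_
    by_contra! hpos
    have := le_hardy_bound hmono hfcont hanti hcont hf1 C.toReal_nonneg hC
      (by linarith [C.toReal_nonneg]) hδ hδ1 hpos
    linarith
  · intro hint
    obtain ⟨c, hc, hc0⟩ := exists_primitive_zero hanti hcont hg1 hint
    exact ⟨ENNReal.ofReal c, ENNReal.ofReal_ne_top, upper hint c hc hc0⟩
  · intro hint
    refine ⟨?_, ?_⟩
    · obtain ⟨c, hc, hc0⟩ := exists_primitive_zero hanti hcont hg1 hint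
      refine ⟨c, ⟨hc, by rw [setIntegral_eq_interval (by linarith), hc0]⟩, ?_⟩
      rintro c' ⟨hc', hc0'⟩
      rw [setIntegral_eq_interval (g := fun t => f t⁻¹) (by linarith)] at hc0'
      rcases lt_trichotomy c' c with h | h | h
      · have := primitive_strictAnti hanti hcont hg1 hint hc'.le h
        linarith
      · exact h
      · have := primitive_strictAnti hanti hcont hg1 hint hc.le h
        linarith
    · intro c hc hc0
      rw [setIntegral_eq_interval (g := fun t => f t⁻¹) (by linarith)] at hc0
      refine ⟨upper hint c hc hc0, fun C hC => ?_⟩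
      by_cases hCtop : C = ⊤
      · simp [hCtop]
      refine ENNReal.ofReal_le_of_le_toReal ?_
      rw [← ENNReal.ofReal_toReal hCtop] at hC
      refine le_of_forall_lt_imp_le_of_dense fun d₀ hd₀ => ?_
      set d := max d₀ 1 with hd
      have hdc : d < c := max_lt hd₀ hc
      have hd1 : 1 ≤ d := le_max_right _ _
      refine (le_max_left d₀ 1).trans ?_
      have hpos : 0 < ∫ t in (0 : ℝ)..d, f t⁻¹ := by
        have := primitive_strictAnti hanti hcont hg1 hint hd1 hdc
        linarith
      -- a small truncation at `0` keeps the integral over `(0, d)` positive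
      have hcontδ : ContinuousOn (fun s => ∫ t in s..d, f t⁻¹) (Set.Icc 0 d) := by
        have := intervalIntegral.continuousOn_primitive_interval' (a := d) (b₁ := 0) (b₂ := d)
          (intervalIntegrable_zero hcont hint (by linarith)) Set.right_mem_uIcc
        rw [Set.uIcc_of_le (by linarith)] at this
        simpa only [← intervalIntegral.integral_symm] using this.fun_neg
      have ev : ∀ᶠ s in nhdsWithin 0 (Set.Ioc 0 1), 0 < ∫ t in s..d, f t⁻¹ := by
        have h1 : Filter.Tendsto (fun s => ∫ t in s..d, f t⁻¹) (nhdsWithin 0 (Set.Icc 0 d))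
            (nhds (∫ t in (0 : ℝ)..d, f t⁻¹)) := hcontδ 0 ⟨le_rfl, by linarith⟩
        refine (h1.mono_left (nhdsWithin_mono _ ?_)).eventually (lt_mem_nhds hpos)
        exact fun s hs => ⟨hs.1.le, hs.2.trans hd1⟩
      have : (nhdsWithin (0 : ℝ) (Set.Ioc 0 1)).NeBot := by
        rw [nhdsWithin_Ioc_eq_nhdsGT one_pos]
        infer_instance
      obtain ⟨δ, hδpos, hδ⟩ := (ev.and self_mem_nhdsWithin).exists
      exact le_hardy_bound hmono hfcont hanti hcont hf1 C.toReal_nonneg hC hd1 hδ.1 hδ.2 hδpos
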